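/- arXiv:1806.09298 — 2 statements merged into one kernel-verified Lean document; each statement's English description precedes it below -/
import Mathlib

section
/- Let X = u − I. There exists v ∈ V with X²v = 0 and β(v, Xv) ≠ 0. (Hence Hesselink's invariant χ(2) of u equals 1, so u lies in the symplectic unipotent class labelled (2₁², 6₃).) -/
open Matrix

/-- `E i j`: the 10×10 matrix with a single `1` in position `(i, j)`. -/
def Emat (K : Type*) [Field K] (i j : Fin 10) : Matrix (Fin 10) (Fin 10) K :=
  Matrix.single i j 1

/-- The antidiagonal Gram matrix `J` of the alternating form `β(v, w) = vᵀ J w`. -/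
def Jmat (K : Type*) [Field K] : Matrix (Fin 10) (Fin 10) K :=
  Matrix.of fun i j => if (i : ℕ) + (j : ℕ) = 9 then 1 else 0

/-- The generator `A = I + E₁,₅ + E₁,₁₀ + E₆,₁₀` (1-indexed). -/
def Amat (K : Type*) [Field K] : Matrix (Fin 10) (Fin 10) K :=
  1 + Emat K 0 4 + Emat K 0 9 + Emat K 5 9

/-- The generator `B = E₂,₁ + E₃,₂ + E₄,₃ + E₅,₄ + E₁₀,₅ + E₉,₁₀ + E₈,₉ + E₇,₈ + E₆,₇ + E₁,₆`
(1-indexed). -/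
def Bmat (K : Type*) [Field K] : Matrix (Fin 10) (Fin 10) K :=
  Emat K 1 0 + Emat K 2 1 + Emat K 3 2 + Emat K 4 3 + Emat K 9 4 +
    Emat K 8 9 + Emat K 7 8 + Emat K 6 7 + Emat K 5 6 + Emat K 0 5

/-- `u = B⁴AB⁶AB⁵A`. -/
def uMat (K : Type*) [Field K] : Matrix (Fin 10) (Fin 10) K :=
  Bmat K ^ 4 * Amat K * Bmat K ^ 6 * Amat K * Bmat K ^ 5 * Amat K

/-- `u' = BAB²AB⁴AB³A`. -/
def u'Mat (K : Type*) [Field K] : Matrix (Fin 10) (Fin 10) K :=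
  Bmat K * Amat K * Bmat K ^ 2 * Amat K * Bmat K ^ 4 * Amat K * Bmat K ^ 3 * Amat K

/-!
Write `e i` for the standard basis vectors, indexed from `0`. The matrix `B` permutes them in a
10-cycle, and `A` fixes every `e i` except `e 4` and `e 9`. Following `e 1` and `e 8` through the
word `u`, none of the factors `A` ever meets `e 4` or `e 9`, so `u` interchanges `e 1` and `e 8`.
Hence for `v = e 1` we get `X v = e 8 - e 1` and `X² v = 2 (e 1 - e 8) = 0`, while
`β(v, X v) = β(e 1, e 8) - β(e 1, e 1) = 1`.
-/

section General

variable {n R : Type*} [Fintype n] [DecidableEq n]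

theorem pow_mulVec_single_one_eq_iterate [Semiring R] {M : Matrix n n R} {f : n → n}
    (hM : ∀ j, M *ᵥ Pi.single j 1 = Pi.single (f j) 1) (k : ℕ) (j : n) :
    M ^ k *ᵥ Pi.single j 1 = Pi.single (f^[k] j) 1 := by
  induction k with
  | zero => rw [pow_zero, one_mulVec, Function.iterate_zero_apply]
  | succ k ih => rw [pow_succ', ← mulVec_mulVec, ih, hM, Function.iterate_succ_apply']

theorem sub_one_sq_mulVec_eq_zero_of_swap [Ring R] [CharP R 2] {M : Matrix n n R} {v w : n → R}
    (hv : M *ᵥ v = w) (hw : M *ᵥ w = v) : (M - 1) ^ 2 *ᵥ v = 0 := by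
  have sub_one_mulVec (x : n → R) : (M - 1) *ᵥ x = M *ᵥ x - x := by
    rw [sub_mulVec, one_mulVec]
  calc (M - 1) ^ 2 *ᵥ v = (v - w) - (w - v) := by
        rw [pow_two, ← mulVec_mulVec, sub_one_mulVec v, hv, sub_one_mulVec, mulVec_sub, hv, hw]
    _ = 0 := by
        ext i
        simp [CharTwo.sub_eq_add, add_comm (w i)]

theorem single_one_dotProduct_mulVec_single_one [NonAssocSemiring R] (M : Matrix n n R) (i j : n) :
    Pi.single i 1 ⬝ᵥ M *ᵥ Pi.single j 1 = M i j := by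
  rw [mulVec_single_one, single_one_dotProduct, col_apply]

end General

section Generators

variable (K : Type*) [Field K]

/-- The 10-cycle `0 → 1 → 2 → 3 → 4 → 9 → 8 → 7 → 6 → 5 → 0` by which `B` permutes the standard
basis vectors; entry `j` of the list is the image of `j`. It is a plain function rather than an
`Equiv.Perm` so that its iterates evaluate by `rfl`. -/
def basisCycle : Fin 10 → Fin 10 :=
  ![1, 2, 3, 4, 9, 0, 5, 6, 7, 8]

theorem Emat_mulVec_single_one (i j k : Fin 10) :
    Emat K i j *ᵥ Pi.single k 1 = if j = k then Pi.single i 1 else 0 := by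
  rw [Emat, single_mulVec_eq, Pi.single_apply, one_mul, ite_smul, one_smul, zero_smul]

theorem Amat_mulVec_single_one {j : Fin 10} (h4 : j ≠ 4) (h9 : j ≠ 9) :
    Amat K *ᵥ Pi.single j 1 = Pi.single j 1 := by
  simp only [Amat, add_mulVec, one_mulVec, Emat_mulVec_single_one, h4.symm, h9.symm, if_false,
    add_zero]

theorem Bmat_mulVec_single_one (j : Fin 10) :
    Bmat K *ᵥ Pi.single j 1 = Pi.single (basisCycle j) 1 := by
  simp only [Bmat, add_mulVec, Emat_mulVec_single_one]
  fin_cases j <;> simp [basisCycle]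

theorem Bmat_pow_mulVec_single_one (k : ℕ) (j : Fin 10) :
    Bmat K ^ k *ᵥ Pi.single j 1 = Pi.single (basisCycle^[k] j) 1 :=
  pow_mulVec_single_one_eq_iterate (Bmat_mulVec_single_one K) k j

theorem uMat_mulVec_single_one_one :
    uMat K *ᵥ Pi.single 1 1 = Pi.single 8 1 := by
  have h5 : basisCycle^[5] 1 = 8 := rfl
  have h6 : basisCycle^[6] 8 = 2 := rfl
  have h4 : basisCycle^[4] 2 = 8 := rfl
  simp only [uMat, ← mulVec_mulVec, Amat_mulVec_single_one, Bmat_pow_mulVec_single_one, h5, h6, h4,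
    ne_eq, Fin.reduceEq, not_false_eq_true]

theorem uMat_mulVec_single_eight_one :
    uMat K *ᵥ Pi.single 8 1 = Pi.single 1 1 := by
  have h5 : basisCycle^[5] 8 = 1 := rfl
  have h6 : basisCycle^[6] 1 = 7 := rfl
  have h4 : basisCycle^[4] 7 = 1 := rfl
  simp only [uMat, ← mulVec_mulVec, Amat_mulVec_single_one, Bmat_pow_mulVec_single_one, h5, h6, h4,
    ne_eq, Fin.reduceEq, not_false_eq_true]

end Generators

/-- with `X = u − I`, there exists `v ∈ V` with `X²v = 0` and `β(v, Xv) ≠ 0`.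
(Hence Hesselink's invariant `χ(2)` of `u` equals `1`, so `u` lies in the symplectic
unipotent class labelled `(2₁², 6₃)`.) -/
theorem statement8 (K : Type*) [Field K] [CharP K 2] :
    ∃ v : Fin 10 → K, ((uMat K - 1) ^ 2).mulVec v = 0 ∧
      dotProduct v ((Jmat K).mulVec ((uMat K - 1).mulVec v)) ≠ 0 := by
  refine ⟨Pi.single 1 1,
    sub_one_sq_mulVec_eq_zero_of_swap (uMat_mulVec_single_one_one K)
      (uMat_mulVec_single_eight_one K), ?_⟩
  have form_eq : Pi.single 1 1 ⬝ᵥ Jmat K *ᵥ (uMat K - 1) *ᵥ Pi.single 1 1 = 1 :=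
    calc Pi.single 1 1 ⬝ᵥ Jmat K *ᵥ (uMat K - 1) *ᵥ Pi.single 1 1
        = Jmat K 1 8 - Jmat K 1 1 := by
          simp only [sub_mulVec, uMat_mulVec_single_one_one, one_mulVec, mulVec_sub,
            dotProduct_sub, single_one_dotProduct_mulVec_single_one]
      _ = 1 := by simp [Jmat]
  rw [form_eq]
  exact one_ne_zero
end

section
/- For each x ∈ {u, u'}, setting X = x − I, one has: β(X³v, X⁴v) = 0 for all v ∈ V, and there exists v ∈ V with β(X²v, X³v) ≠ 0. (Hence Hesselink's invariant χ(6) equals 3 for both u and u', consistent with u and u' lying in the classes (2₁², 6₃) and (2₀², 6₃) respectively.) -/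
open Matrix

/-!
Let `g` preserve a bilinear form `β` and put `X = g - 1`. From `β(Xv, gw) = -β(v, Xw)` one gets
`β(X^a v, g^a w) = (-1)^a β(v, X^a w)`. If `X^(a+b+1) = 0`, then `g` is invertible and
`X^(a+b) g^a = X^(a+b)`, so this becomes `β(X^a v, X^b w) = (-1)^a β(v, X^(a+b) w)`.

Both `u` and `u'` are products of the isometries `A` and `B`, and each has a vector `w`, namely
`e₁ + e₅ + e₁₀` and `e₄` respectively, with `X⁵v = β(v, w) w` for all `v` and `Xw = 0`.
Hence `X⁶ = 0`, `β(X³v, X⁴v) = -β(v, X⁷v) = 0` and `β(X²v, X³v) = β(v, X⁵v) = β(v, w)²`.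
-/

section UnipotentIsometry

variable {R M : Type*} [CommRing R] [AddCommGroup M] [Module R M]
  {B : LinearMap.BilinForm R M} {g : Module.End R M}

/-- The endomorphisms preserving a bilinear form `B`, as a submonoid. -/
def isometrySubmonoid (B : LinearMap.BilinForm R M) : Submonoid (Module.End R M) where
  carrier := {g | B.IsOrthogonal g}
  one_mem' _ _ := rfl
  mul_mem' {_ h} hg hh v w := (hg (h v) (h w)).trans (hh v w)

theorem apply_sub_one_apply_of_mem_isometrySubmonoid (hg : g ∈ isometrySubmonoid B) (v w : M) :
    B ((g - 1) v) (g w) = -B v ((g - 1) w) := by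
  have preserves : B (g v) (g w) = B v w := hg v w
  simp only [LinearMap.sub_apply, Module.End.one_apply, map_sub, preserves, neg_sub]

theorem apply_sub_one_pow_apply_pow (hg : g ∈ isometrySubmonoid B) (a : ℕ) (v w : M) :
    B (((g - 1) ^ a) v) ((g ^ a) w) = (-1) ^ a * B v (((g - 1) ^ a) w) := by
  induction a generalizing v w with
  | zero => simp
  | succ a ih =>
    calc B (((g - 1) ^ (a + 1)) v) ((g ^ (a + 1)) w)
        = B (((g - 1) ^ a) ((g - 1) v)) ((g ^ a) (g w)) := by
          simp only [pow_succ, Module.End.mul_apply]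
      _ = (-1) ^ a * B ((g - 1) v) (((g - 1) ^ a) (g w)) := ih _ _
      _ = (-1) ^ a * B ((g - 1) v) (g (((g - 1) ^ a) w)) := by
          have comm : Commute ((g - 1) ^ a) g :=
            ((Commute.refl g).sub_left (.one_left g)).pow_left a
          rw [← Module.End.mul_apply, comm.eq, Module.End.mul_apply]
      _ = (-1) ^ (a + 1) * B v (((g - 1) ^ (a + 1)) w) := by
          rw [apply_sub_one_apply_of_mem_isometrySubmonoid hg, pow_succ' (g - 1),
            Module.End.mul_apply]
          ring

theorem sub_one_pow_mul_pow_eq_self {S : Type*} [Ring S] {g : S} {n : ℕ}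
    (h : (g - 1) ^ (n + 1) = 0) (a : ℕ) : (g - 1) ^ n * g ^ a = (g - 1) ^ n := by
  rw [← sub_eq_zero, ← mul_sub_one, ← mul_geom_sum, ← mul_assoc, ← pow_succ, h, zero_mul]

theorem surjective_pow_of_sub_one_pow_eq_zero {n : ℕ} (h : (g - 1) ^ n = 0) (a : ℕ) :
    Function.Surjective (g ^ a) := by
  have isUnit_g : IsUnit g := by simpa using IsNilpotent.isUnit_add_one ⟨n, h⟩
  exact ((Module.End.isUnit_iff _).mp (isUnit_g.pow a)).surjective

theorem apply_sub_one_pow_apply_sub_one_pow (hg : g ∈ isometrySubmonoid B) {a b : ℕ}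
    (h : (g - 1) ^ (a + b + 1) = 0) (v w : M) :
    B (((g - 1) ^ a) v) (((g - 1) ^ b) w) = (-1) ^ a * B v (((g - 1) ^ (a + b)) w) := by
  obtain ⟨y, rfl⟩ := surjective_pow_of_sub_one_pow_eq_zero h a w
  have comm : Commute ((g - 1) ^ b) (g ^ a) :=
    ((Commute.refl g).sub_left (.one_left g)).pow_pow b a
  calc B (((g - 1) ^ a) v) (((g - 1) ^ b) ((g ^ a) y))
      = B (((g - 1) ^ a) v) ((g ^ a) (((g - 1) ^ b) y)) := by
        rw [← Module.End.mul_apply, comm.eq, Module.End.mul_apply]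
    _ = (-1) ^ a * B v (((g - 1) ^ (a + b)) y) := by
        rw [apply_sub_one_pow_apply_pow hg, pow_add, Module.End.mul_apply]
    _ = (-1) ^ a * B v (((g - 1) ^ (a + b)) ((g ^ a) y)) := by
        rw [← Module.End.mul_apply, sub_one_pow_mul_pow_eq_self h]

theorem apply_sub_one_pow_apply_sub_one_pow_eq_zero (hg : g ∈ isometrySubmonoid B) {a b : ℕ}
    (h : (g - 1) ^ (a + b) = 0) (v w : M) :
    B (((g - 1) ^ a) v) (((g - 1) ^ b) w) = 0 := by
  rw [apply_sub_one_pow_apply_sub_one_pow hg (by rw [pow_succ, h, zero_mul]), h,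
    LinearMap.zero_apply, map_zero, mul_zero]

variable {k : ℕ} {w : M}

theorem pow_succ_eq_zero_of_rankOne {f : Module.End R M} {m : ℕ} {c : M → R}
    (hpow : ∀ v, (f ^ m) v = c v • w) (hw : f w = 0) : f ^ (m + 1) = 0 := by
  ext v
  rw [pow_succ', Module.End.mul_apply, hpow, map_smul, hw, smul_zero, LinearMap.zero_apply]

theorem apply_sub_one_pow_succ_eq_zero_of_rankOne (hg : g ∈ isometrySubmonoid B)
    (hpow : ∀ v, ((g - 1) ^ (2 * k + 1)) v = B v w • w) (hw : (g - 1) w = 0) (v : M) :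
    B (((g - 1) ^ (k + 1)) v) (((g - 1) ^ (k + 2)) v) = 0 :=
  apply_sub_one_pow_apply_sub_one_pow_eq_zero hg
    (pow_eq_zero_of_le (by lia) (pow_succ_eq_zero_of_rankOne hpow hw)) v v

theorem apply_sub_one_pow_eq_sq_of_rankOne (hg : g ∈ isometrySubmonoid B)
    (hpow : ∀ v, ((g - 1) ^ (2 * k + 1)) v = B v w • w) (hw : (g - 1) w = 0) (v : M) :
    B (((g - 1) ^ k) v) (((g - 1) ^ (k + 1)) v) = (-1) ^ k * B v w ^ 2 := by
  have exponent : k + (k + 1) = 2 * k + 1 := by lia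
  have nilpotent : (g - 1) ^ (k + (k + 1) + 1) = 0 := by
    rw [exponent]
    exact pow_succ_eq_zero_of_rankOne hpow hw
  rw [apply_sub_one_pow_apply_sub_one_pow hg nilpotent, exponent, hpow, map_smul, smul_eq_mul, sq]

end UnipotentIsometry

section MatrixIsometry

variable {R n : Type*} [CommRing R] [Fintype n] [DecidableEq n]

/-- The matrices `g` with `β(g v, g w) = β(v, w)` for the bilinear form `β(v, w) = vᵀ J w`;
for alternating nondegenerate `J` these are the symplectic matrices. -/
def matrixIsometrySubmonoid (J : Matrix n n R) : Submonoid (Matrix n n R) :=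
  (isometrySubmonoid (toBilin' J)).comap (toLinAlgEquiv' : Matrix n n R ≃ₐ[R] _)

theorem mem_matrixIsometrySubmonoid_iff {J g : Matrix n n R} :
    g ∈ matrixIsometrySubmonoid J ↔
      ∀ v w, (g *ᵥ v) ⬝ᵥ (J *ᵥ (g *ᵥ w)) = v ⬝ᵥ (J *ᵥ w) := by
  simp only [← toBilin'_apply']
  rfl

theorem dotProduct_eq_zero_and_exists_ne_zero_of_rankOne [IsDomain R] {J g : Matrix n n R} {k : ℕ}
    {w v₀ : n → R} (hg : g ∈ matrixIsometrySubmonoid J)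
    (hpow : ∀ v, ((g - 1) ^ (2 * k + 1)) *ᵥ v = (v ⬝ᵥ (J *ᵥ w)) • w)
    (hw : (g - 1) *ᵥ w = 0) (hv₀ : v₀ ⬝ᵥ (J *ᵥ w) ≠ 0) :
    (∀ v, (((g - 1) ^ (k + 1)) *ᵥ v) ⬝ᵥ (J *ᵥ (((g - 1) ^ (k + 2)) *ᵥ v)) = 0) ∧
      ∃ v, (((g - 1) ^ k) *ᵥ v) ⬝ᵥ (J *ᵥ (((g - 1) ^ (k + 1)) *ᵥ v)) ≠ 0 := by
  simp only [← toBilin'_apply'] at *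
  simp only [← toLinAlgEquiv'_apply, map_pow, map_sub, map_one] at *
  refine ⟨apply_sub_one_pow_succ_eq_zero_of_rankOne hg hpow hw, v₀, ?_⟩
  rw [apply_sub_one_pow_eq_sq_of_rankOne hg hpow hw]
  exact mul_ne_zero (pow_ne_zero _ (neg_ne_zero.mpr one_ne_zero)) (pow_ne_zero _ hv₀)

theorem pow_five_mulVec {S : Type*} [Semiring S] (g : Matrix n n S) (v : n → S) :
    (g ^ 5) *ᵥ v = g *ᵥ ((g ^ 2) *ᵥ ((g ^ 2) *ᵥ v)) := by
  simp only [mulVec_mulVec, ← pow_add, ← pow_succ']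

end MatrixIsometry

section Generators

variable {K : Type*} [Field K]

theorem Emat_mulVec (i j : Fin 10) (v : Fin 10 → K) : Emat K i j *ᵥ v = Pi.single i (v j) := by
  rw [Emat, single_mulVec, one_mul]
  rfl

theorem Jmat_mulVec (v : Fin 10 → K) : Jmat K *ᵥ v = fun i => v i.rev := by
  ext i
  have antidiagonal (j : Fin 10) : (i : ℕ) + j = 9 ↔ i.rev = j := by
    rw [Fin.ext_iff, Fin.val_rev]
    lia
  simp [Jmat, mulVec, dotProduct, antidiagonal]

theorem Amat_mulVec (v : Fin 10 → K) :
    Amat K *ᵥ v = ![v 0 + v 4 + v 9, v 1, v 2, v 3, v 4, v 5 + v 9, v 6, v 7, v 8, v 9] := by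
  ext i
  fin_cases i <;> simp [Amat, add_mulVec, Emat_mulVec]

theorem Bmat_mulVec (v : Fin 10 → K) :
    Bmat K *ᵥ v = ![v 5, v 0, v 1, v 2, v 3, v 6, v 7, v 8, v 9, v 4] := by
  ext i
  fin_cases i <;> simp [Bmat, add_mulVec, Emat_mulVec]

theorem dotProduct_Jmat_mulVec (v w : Fin 10 → K) :
    v ⬝ᵥ (Jmat K *ᵥ w) = v 0 * w 9 + v 1 * w 8 + v 2 * w 7 + v 3 * w 6 + v 4 * w 5 +
      v 5 * w 4 + v 6 * w 3 + v 7 * w 2 + v 8 * w 1 + v 9 * w 0 := by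
  simp only [Jmat_mulVec, dotProduct, Fin.sum_univ_castSucc, Fin.sum_univ_zero, zero_add]
  rfl

theorem Bmat_mem_matrixIsometrySubmonoid : Bmat K ∈ matrixIsometrySubmonoid (Jmat K) := by
  refine mem_matrixIsometrySubmonoid_iff.mpr fun v w => ?_
  rw [Bmat_mulVec, Bmat_mulVec, dotProduct_Jmat_mulVec, dotProduct_Jmat_mulVec]
  simp only [cons_val]
  ring

variable [CharP K 2]

theorem Amat_mem_matrixIsometrySubmonoid : Amat K ∈ matrixIsometrySubmonoid (Jmat K) := by
  refine mem_matrixIsometrySubmonoid_iff.mpr fun v w => ?_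
  rw [Amat_mulVec, Amat_mulVec, dotProduct_Jmat_mulVec, dotProduct_Jmat_mulVec]
  simp only [cons_val]
  grind

theorem Bmat_pow_mul_Amat_mem_matrixIsometrySubmonoid (m : ℕ) :
    Bmat K ^ m * Amat K ∈ matrixIsometrySubmonoid (Jmat K) :=
  mul_mem (pow_mem Bmat_mem_matrixIsometrySubmonoid m) Amat_mem_matrixIsometrySubmonoid

theorem uMat_mem_matrixIsometrySubmonoid : uMat K ∈ matrixIsometrySubmonoid (Jmat K) := by
  have hBA (m : ℕ) : Bmat K ^ m * Amat K ∈ matrixIsometrySubmonoid (Jmat K) :=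
    Bmat_pow_mul_Amat_mem_matrixIsometrySubmonoid m
  simpa only [uMat, mul_assoc] using mul_mem (hBA 4) (mul_mem (hBA 6) (hBA 5))

theorem u'Mat_mem_matrixIsometrySubmonoid : u'Mat K ∈ matrixIsometrySubmonoid (Jmat K) := by
  have hBA (m : ℕ) : Bmat K ^ m * Amat K ∈ matrixIsometrySubmonoid (Jmat K) :=
    Bmat_pow_mul_Amat_mem_matrixIsometrySubmonoid m
  simpa only [u'Mat, mul_assoc, pow_one] using
    mul_mem (hBA 1) (mul_mem (hBA 2) (mul_mem (hBA 4) (hBA 3)))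

end Generators

section TopPowers

variable {K : Type*} [Field K]

variable (K) in
/-- A vector spanning the image of `(u - 1) ^ 5`. -/
def uTopVec : Fin 10 → K := ![1, 0, 0, 0, 1, 0, 0, 0, 0, 1]

variable (K) in
/-- A vector spanning the image of `(u' - 1) ^ 5`. -/
def u'TopVec : Fin 10 → K := ![0, 0, 0, 1, 0, 0, 0, 0, 0, 0]

theorem dotProduct_Jmat_mulVec_uTopVec (v : Fin 10 → K) :
    v ⬝ᵥ (Jmat K *ᵥ uTopVec K) = v 0 + v 5 + v 9 := by
  simp [dotProduct_Jmat_mulVec, uTopVec]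

theorem dotProduct_Jmat_mulVec_u'TopVec (v : Fin 10 → K) :
    v ⬝ᵥ (Jmat K *ᵥ u'TopVec K) = v 6 := by
  simp [dotProduct_Jmat_mulVec, u'TopVec]

variable [CharP K 2]

theorem uMat_sub_one_mulVec (v : Fin 10 → K) :
    (uMat K - 1) *ᵥ v = ![v 4 + v 5 + v 9, v 1 + v 8, v 2 + v 7, v 0 + v 3 + v 6 + v 9,
      v 0 + v 3 + v 4 + v 5, v 0 + v 5 + v 9, v 3 + v 6, v 2 + v 7, v 1 + v 8, v 0 + v 4] := by
  simp only [uMat, sub_mulVec, one_mulVec, pow_succ, pow_zero, one_mul, ← mulVec_mulVec,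
    Amat_mulVec, Bmat_mulVec, cons_val]
  ext i
  fin_cases i <;> simp only [Pi.sub_apply, cons_val, Fin.reduceFinMk] <;> grind

theorem uMat_sub_one_sq_mulVec (v : Fin 10 → K) :
    ((uMat K - 1) ^ 2) *ᵥ v = ![v 0 + v 3 + v 9, 0, 0, v 5, v 0 + v 5 + v 6 + v 9, 0, v 0 + v 9,
      0, 0, v 0 + v 3 + v 9] := by
  simp only [pow_two, ← mulVec_mulVec, uMat_sub_one_mulVec, cons_val]
  ext i
  fin_cases i <;> simp only [cons_val, Fin.reduceFinMk] <;> grind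

theorem u'Mat_sub_one_mulVec (v : Fin 10 → K) :
    (u'Mat K - 1) *ᵥ v = ![v 2 + v 4 + v 8 + v 9, v 2 + v 8 + v 9, v 6, v 1 + v 2 + v 6 + v 7,
      0, v 9, 0, v 1 + v 2, v 2, 0] := by
  simp only [u'Mat, sub_mulVec, one_mulVec, pow_succ, pow_zero, one_mul, ← mulVec_mulVec,
    Amat_mulVec, Bmat_mulVec, cons_val]
  ext i
  fin_cases i <;> simp only [Pi.sub_apply, cons_val, Fin.reduceFinMk] <;> grind

theorem u'Mat_sub_one_sq_mulVec (v : Fin 10 → K) :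
    ((u'Mat K - 1) ^ 2) *ᵥ v = ![v 2 + v 6, v 2 + v 6, 0, v 1 + v 6 + v 8 + v 9, 0, 0, 0,
      v 2 + v 6 + v 8 + v 9, v 6, 0] := by
  simp only [pow_two, ← mulVec_mulVec, u'Mat_sub_one_mulVec, cons_val]
  ext i
  fin_cases i <;> simp only [cons_val, Fin.reduceFinMk] <;> grind

theorem uMat_sub_one_mulVec_uTopVec : (uMat K - 1) *ᵥ uTopVec K = 0 := by
  rw [uMat_sub_one_mulVec, uTopVec]
  ext i
  fin_cases i <;> simp only [cons_val, Fin.reduceFinMk, Pi.zero_apply] <;> grind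

theorem u'Mat_sub_one_mulVec_u'TopVec : (u'Mat K - 1) *ᵥ u'TopVec K = 0 := by
  rw [u'Mat_sub_one_mulVec, u'TopVec]
  ext i
  fin_cases i <;> simp

theorem uMat_sub_one_pow_five_mulVec (v : Fin 10 → K) :
    ((uMat K - 1) ^ 5) *ᵥ v = (v ⬝ᵥ (Jmat K *ᵥ uTopVec K)) • uTopVec K := by
  rw [dotProduct_Jmat_mulVec_uTopVec, uTopVec]
  simp only [pow_five_mulVec, uMat_sub_one_sq_mulVec, uMat_sub_one_mulVec, cons_val]
  ext i
  fin_cases i <;> simp only [cons_val, Fin.reduceFinMk, Pi.smul_apply, smul_eq_mul] <;> grind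

theorem u'Mat_sub_one_pow_five_mulVec (v : Fin 10 → K) :
    ((u'Mat K - 1) ^ 5) *ᵥ v = (v ⬝ᵥ (Jmat K *ᵥ u'TopVec K)) • u'TopVec K := by
  rw [dotProduct_Jmat_mulVec_u'TopVec, u'TopVec]
  simp only [pow_five_mulVec, u'Mat_sub_one_sq_mulVec, u'Mat_sub_one_mulVec, cons_val]
  ext i
  fin_cases i <;> simp only [cons_val, Fin.reduceFinMk, Pi.smul_apply, smul_eq_mul] <;> grind

end TopPowers

/-- for each `x ∈ {u, u'}`, setting `X = x − I`, one has
`β(X³v, X⁴v) = 0` for all `v ∈ V`, and there exists `v ∈ V` with `β(X²v, X³v) ≠ 0`.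
(Hence Hesselink's invariant `χ(6)` equals `3` for both `u` and `u'`.) -/
theorem statement10 (K : Type*) [Field K] [CharP K 2] :
    ∀ x ∈ ({uMat K, u'Mat K} : Set (Matrix (Fin 10) (Fin 10) K)),
      (∀ v : Fin 10 → K,
        dotProduct (((x - 1) ^ 3).mulVec v) ((Jmat K).mulVec (((x - 1) ^ 4).mulVec v)) = 0) ∧
      ∃ v : Fin 10 → K,
        dotProduct (((x - 1) ^ 2).mulVec v) ((Jmat K).mulVec (((x - 1) ^ 3).mulVec v)) ≠ 0 := by
  rintro x (rfl | rfl)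
  · refine dotProduct_eq_zero_and_exists_ne_zero_of_rankOne (k := 2) (v₀ := Pi.single 0 1)
      uMat_mem_matrixIsometrySubmonoid uMat_sub_one_pow_five_mulVec uMat_sub_one_mulVec_uTopVec ?_
    rw [dotProduct_Jmat_mulVec_uTopVec]
    simp
  · refine dotProduct_eq_zero_and_exists_ne_zero_of_rankOne (k := 2) (v₀ := Pi.single 6 1)
      u'Mat_mem_matrixIsometrySubmonoid u'Mat_sub_one_pow_five_mulVec
      u'Mat_sub_one_mulVec_u'TopVec ?_
    rw [dotProduct_Jmat_mulVec_u'TopVec]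
    simp
end
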